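/- arXiv:1611.07414 — 3 statements merged into one kernel-verified Lean document; each statement's English description precedes it below -/
import Mathlib

section
/- Let there be m machines with demands D_1,…,D_m > 0 and cardinality bounds f_1,…,f_m ∈ ℕ, and n job types with capacities c_1,…,c_n > 0 and supplies s_1,…,s_n ∈ ℕ. Suppose z : {1,…,m} × {1,…,n} → ℝ_{≥0} satisfies Σ_i z_{ij} ≤ s_j for every j, Σ_j z_{ij}·min(c_j, D_i) ≥ D_i for every i, and Σ_j z_{ij} ≤ f_i for every i. For each machine i let C_i := max{ c_j : z_{ij} > 0 }. Then there exist nonnegative integers n_{ij} with n_{ij} > 0 only if z_{ij} > 0, Σ_i n_{ij} ≤ s_j for every j, Σ_j n_{ij} ≤ f_i for every i, and Σ_j n_{ij}·min(c_j, D_i) ≥ D_i − C_i for every machine i. -/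
open Finset

/-!
List the job types in order of decreasing value for machine `i` and pour the weights `z i j`, in
this order, into consecutive slots of capacity one. Discarding the last, partial slot leaves a
fractional assignment of the full slots of all machines to job types that respects the supplies, so
Hall's theorem provides an integral one within its support. The job type assigned to a slot is worth
at least as much as everything poured into the next slot of the same machine. Hence a machine loses
at most the value of its first slot, which is at most the largest value in the support of `z i`.
-/

section Hall

variable {ι κ : Type*} [Fintype ι] [DecidableEq κ]

theorem exists_assignment_of_card_le_sum_biUnion (s : κ → ℕ) (t : ι → Finset κ)
    (hall : ∀ A : Finset ι, #A ≤ ∑ j ∈ A.biUnion t, s j) :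
    ∃ g : ι → κ, (∀ a, g a ∈ t a) ∧ ∀ j, #{a | g a = j} ≤ s j := by
  classical
  -- Hall's theorem applies once each `j` is replaced by `s j` copies of itself.
  let copies (J : Finset κ) : Finset (Σ j, Fin (s j)) := J.sigma fun _ => univ
  have card_copies (J : Finset κ) : #(copies J) = ∑ j ∈ J, s j := by simp [copies]
  have copies_biUnion (A : Finset ι) : copies (A.biUnion t) = A.biUnion fun a => copies (t a) := by
    ext; simp [copies]
  obtain ⟨F, F_injective, hF⟩ :=
    (all_card_le_biUnion_card_iff_exists_injective fun a => copies (t a)).1 fun A => by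
      rw [← copies_biUnion, card_copies]
      exact hall A
  refine ⟨fun a => (F a).1, fun a => (mem_sigma.1 (hF a)).1, fun j => ?_⟩
  calc #{a | (F a).1 = j} ≤ #(copies {j}) :=
        card_le_card_of_injOn F (fun a ha => by simpa [copies] using ha) F_injective.injOn
    _ = s j := by rw [card_copies, sum_singleton]

variable {R : Type*} [CommRing R] [LinearOrder R] [IsStrictOrderedRing R] [Fintype κ]

theorem exists_assignment_of_fractional (s : κ → ℕ) (x : ι → κ → R) (hx : ∀ a j, 0 ≤ x a j)
    (hrow : ∀ a, 1 ≤ ∑ j, x a j) (hcol : ∀ j, ∑ a, x a j ≤ s j) :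
    ∃ g : ι → κ, (∀ a, 0 < x a (g a)) ∧ ∀ j, #{a | g a = j} ≤ s j := by
  let t (a : ι) : Finset κ := {j | 0 < x a j}
  have sum_row_eq {A : Finset ι} {a : ι} (ha : a ∈ A) :
      ∑ j, x a j = ∑ j ∈ A.biUnion t, x a j := by
    refine (sum_subset (subset_univ _) fun j _ hj => ?_).symm
    refine ((hx a j).eq_of_not_lt fun hpos => hj ?_).symm
    exact mem_biUnion.2 ⟨a, ha, by simpa [t] using hpos⟩
  have hall (A : Finset ι) : #A ≤ ∑ j ∈ A.biUnion t, s j := by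
    rw [← Nat.cast_le (α := R)]
    calc (#A : R) = ∑ a ∈ A, 1 := by simp
      _ ≤ ∑ a ∈ A, ∑ j, x a j := sum_le_sum fun a _ => hrow a
      _ = ∑ a ∈ A, ∑ j ∈ A.biUnion t, x a j := sum_congr rfl fun a ha => sum_row_eq ha
      _ = ∑ j ∈ A.biUnion t, ∑ a ∈ A, x a j := sum_comm
      _ ≤ ∑ j ∈ A.biUnion t, ∑ a, x a j :=
        sum_le_sum fun j _ => sum_le_sum_of_subset_of_nonneg (subset_univ A) fun a _ _ => hx a j
      _ ≤ ∑ j ∈ A.biUnion t, (s j : R) := sum_le_sum fun j _ => hcol j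
      _ = ((∑ j ∈ A.biUnion t, s j : ℕ) : R) := (Nat.cast_sum _ _).symm
  obtain ⟨g, g_mem, hg⟩ := exists_assignment_of_card_le_sum_biUnion s t hall
  exact ⟨g, fun a => (mem_filter.1 (g_mem a)).2, hg⟩

end Hall

section Slots

variable {R : Type*} [CommRing R] [LinearOrder R]

/-- The amount of the `k`-th slot `[k, k + 1]` that is filled by pouring a total weight `y ≥ 0` into
the slots `[0, 1], [1, 2], …` in this order. -/
def slotFill (k : ℕ) (y : R) : R := min y (k + 1) - min y k

/-- `w k j` is the part of the weight `z j` that goes to slot `k` when the items `j ∈ S` are poured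
into consecutive slots of capacity one, in an order along which the value `v` does not increase. Of
this order only the comparison of consecutive slots is recorded. -/
structure IsSlotting {κ α : Type*} [LE α] (S : Finset κ) (z : κ → R) (v : κ → α)
    (w : ℕ → κ → R) : Prop where
  nonneg : ∀ k, ∀ j ∈ S, 0 ≤ w k j
  sum_slot : ∀ k, ∑ j ∈ S, w k j = slotFill k (∑ j ∈ S, z j)
  sum_range : ∀ j ∈ S, ∀ N : ℕ, ∑ i ∈ S, z i ≤ N → ∑ k ∈ range N, w k j = z j
  value_le : ∀ k, ∀ j ∈ S, ∀ j' ∈ S, 0 < w k j → 0 < w (k + 1) j' → v j' ≤ v j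

theorem sum_range_slotFill {N : ℕ} {y : R} (hy : 0 ≤ y) (hyN : y ≤ N) :
    ∑ k ∈ range N, slotFill k y = y := by
  have telescope := sum_range_sub (fun k : ℕ => min y (k : R)) N
  simpa only [slotFill, Nat.cast_add_one, Nat.cast_zero, min_eq_left hyN, min_eq_right hy,
    sub_zero] using telescope

theorem IsSlotting.sum_range_add_one {κ α : Type*} [LE α] {S : Finset κ} {z : κ → R} {v : κ → α}
    {w : ℕ → κ → R} {K : ℕ} (h : IsSlotting S z v w) (hK : ∑ j ∈ S, z j ≤ K + 1)
    {j : κ} (hj : j ∈ S) : ∑ k ∈ range (K + 1), w k j = z j :=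
  h.sum_range j hj _ (by exact_mod_cast hK)

variable [IsStrictOrderedRing R]

theorem slotFill_of_le {k : ℕ} {y : R} (h : y ≤ k) : slotFill k y = 0 := by
  rw [slotFill, min_eq_left h, min_eq_left (h.trans (lt_add_one _).le), sub_self]

theorem slotFill_of_add_one_le {k : ℕ} {y : R} (h : (k : R) + 1 ≤ y) : slotFill k y = 1 := by
  rw [slotFill, min_eq_right h, min_eq_right ((lt_add_one _).le.trans h), add_sub_cancel_left]

theorem slotFill_le_one (k : ℕ) (y : R) : slotFill k y ≤ 1 := by
  unfold slotFill
  grind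

theorem monotone_slotFill (k : ℕ) : Monotone (slotFill k : R → R) := fun y y' h => by
  unfold slotFill
  grind

theorem sum_mul_le_of_sum_le_one {κ : Type*} {S : Finset κ} {w v : κ → R} {b : R} (hb : 0 ≤ b)
    (hw : ∀ j ∈ S, 0 ≤ w j) (hw1 : ∑ j ∈ S, w j ≤ 1) (hv : ∀ j ∈ S, 0 < w j → v j ≤ b) :
    ∑ j ∈ S, w j * v j ≤ b :=
  calc ∑ j ∈ S, w j * v j ≤ ∑ j ∈ S, w j * b := sum_le_sum fun j hj => by
        obtain hzero | hpos := (hw j hj).eq_or_lt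
        · simp only [← hzero, zero_mul, le_refl]
        · exact mul_le_mul_of_nonneg_left (hv j hj hpos) hpos.le
    _ = (∑ j ∈ S, w j) * b := (sum_mul _ _ _).symm
    _ ≤ b := mul_le_of_le_one_left hb hw1

theorem IsSlotting.insert_min {κ α : Type*} [DecidableEq κ] [Preorder α] {S : Finset κ} {z : κ → R}
    {v : κ → α} {w : ℕ → κ → R} (h : IsSlotting S z v w) {a : κ}
    (ha : a ∉ S) (hva : ∀ j ∈ S, v a ≤ v j) (hza : 0 ≤ z a) (hzS : 0 ≤ ∑ j ∈ S, z j) :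
    IsSlotting (insert a S) z v fun k => Function.update (w k) a
      (slotFill k (∑ j ∈ insert a S, z j) - slotFill k (∑ j ∈ S, z j)) := by
  have ne_of_mem {j : κ} (hj : j ∈ S) : j ≠ a := ne_of_mem_of_not_mem hj ha
  have sum_insert_eq : ∑ j ∈ insert a S, z j = z a + ∑ j ∈ S, z j := sum_insert ha
  have sum_le_insert : ∑ j ∈ S, z j ≤ ∑ j ∈ insert a S, z j := by linarith
  refine ⟨fun k => ?_, fun k => ?_, ?_, fun k => ?_⟩
  · simp only [forall_mem_insert, Function.update_self]
    refine ⟨sub_nonneg.2 (monotone_slotFill k sum_le_insert), fun j hj => ?_⟩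
    simpa only [Function.update_of_ne (ne_of_mem hj)] using h.nonneg k j hj
  · rw [sum_insert ha, Function.update_self, sum_update_of_notMem ha, h.sum_slot, sub_add_cancel]
  · simp only [forall_mem_insert, Function.update_self]
    refine ⟨fun N hN => ?_, fun j hj N hN => ?_⟩
    · rw [sum_sub_distrib, sum_range_slotFill (hzS.trans sum_le_insert) hN,
        sum_range_slotFill hzS (sum_le_insert.trans hN), sum_insert_eq, add_sub_cancel_right]
    · simpa only [Function.update_of_ne (ne_of_mem hj)] using
        h.sum_range j hj N (sum_le_insert.trans hN)
  · simp only [forall_mem_insert, Function.update_self]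
    refine ⟨⟨fun _ _ => le_rfl, fun j hj hwa hwj => ?_⟩, fun j hj => ⟨fun _ _ => hva j hj, ?_⟩⟩
    · -- If `a` reaches slot `k`, then `S` does not fill it, so nothing of `S` reaches slot `k + 1`.
      rw [Function.update_of_ne (ne_of_mem hj)] at hwj
      have slot_pos : 0 < slotFill (k + 1) (∑ i ∈ S, z i) :=
        h.sum_slot (k + 1) ▸ sum_pos' (h.nonneg (k + 1)) ⟨j, hj, hwj⟩
      have full : (k : R) + 1 ≤ ∑ i ∈ S, z i := by
        by_contra! hlt
        exact slot_pos.ne' (slotFill_of_le (by exact_mod_cast hlt.le))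
      rw [slotFill_of_add_one_le full, slotFill_of_add_one_le (full.trans sum_le_insert),
        sub_self] at hwa
      exact absurd hwa (lt_irrefl 0)
    · intro j' hj'
      simpa only [Function.update_of_ne (ne_of_mem hj), Function.update_of_ne (ne_of_mem hj')]
        using h.value_le k j hj j' hj'

theorem exists_isSlotting {κ α : Type*} [LinearOrder α] (S : Finset κ) {z : κ → R} (v : κ → α)
    (hz : ∀ j ∈ S, 0 ≤ z j) : ∃ w, IsSlotting S z v w := by
  classical
  induction S using induction_on_min_value v with
  | empty => exact ⟨0, by simp, by simp [slotFill_of_le], by simp, by simp⟩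
  | insert a S ha hva ih =>
    obtain ⟨hza, hzS⟩ := (forall_mem_insert _ _ _).1 hz
    obtain ⟨w, hw⟩ := ih hzS
    exact ⟨_, hw.insert_min ha hva hza (sum_nonneg hzS)⟩

namespace IsSlotting

variable {κ : Type*}

section Weights

variable {α : Type*} [LE α] {S : Finset κ} {z : κ → R} {v : κ → α} {w : ℕ → κ → R} {K : ℕ}

theorem sum_slot_le_one (h : IsSlotting S z v w) (k : ℕ) : ∑ j ∈ S, w k j ≤ 1 :=
  h.sum_slot k ▸ slotFill_le_one k _

theorem sum_slot_eq_one (h : IsSlotting S z v w) {k : ℕ} (hk : (k : R) + 1 ≤ ∑ j ∈ S, z j) :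
    ∑ j ∈ S, w k j = 1 := by
  rw [h.sum_slot, slotFill_of_add_one_le hk]

theorem sum_range_le (h : IsSlotting S z v w) (hK : ∑ j ∈ S, z j ≤ K + 1) {j : κ} (hj : j ∈ S) :
    ∑ k ∈ range K, w k j ≤ z j := by
  rw [← h.sum_range_add_one hK hj, sum_range_succ]
  exact le_add_of_nonneg_right (h.nonneg K j hj)

theorem weight_le (h : IsSlotting S z v w) (hK : ∑ j ∈ S, z j ≤ K + 1) {j : κ} (hj : j ∈ S)
    {k : ℕ} (hk : k < K + 1) : w k j ≤ z j := by
  rw [← h.sum_range_add_one hK hj]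
  exact single_le_sum (f := (w · j)) (fun k _ => h.nonneg k j hj) (mem_range.2 hk)

end Weights

theorem sum_mul_le_add_sum {S : Finset κ} {z v : κ → R} {w : ℕ → κ → R} {K : ℕ}
    (h : IsSlotting S z v w) (hK : ∑ j ∈ S, z j ≤ K + 1) (hv : ∀ j ∈ S, 0 ≤ v j) {V : R}
    (hV : 0 ≤ V) (hvV : ∀ j ∈ S, 0 < z j → v j ≤ V) {g : Fin K → κ} (hgS : ∀ k, g k ∈ S)
    (hg : ∀ k : Fin K, 0 < w k (g k)) :
    ∑ j ∈ S, z j * v j ≤ V + ∑ k, v (g k) := by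
  have first_slot_le : ∑ j ∈ S, w 0 j * v j ≤ V :=
    sum_mul_le_of_sum_le_one hV (h.nonneg 0) (h.sum_slot_le_one 0) fun j hj hw =>
      hvV j hj (hw.trans_le (h.weight_le hK hj K.succ_pos))
  have next_slot_le (k : Fin K) : ∑ j ∈ S, w (k + 1) j * v j ≤ v (g k) :=
    sum_mul_le_of_sum_le_one (hv _ (hgS k)) (h.nonneg _) (h.sum_slot_le_one _) fun j hj hw =>
      h.value_le k (g k) (hgS k) j hj (hg k) hw
  calc ∑ j ∈ S, z j * v j = ∑ j ∈ S, ∑ k ∈ range (K + 1), w k j * v j :=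
        sum_congr rfl fun j hj => by rw [← sum_mul, h.sum_range_add_one hK hj]
    _ = ∑ k ∈ range (K + 1), ∑ j ∈ S, w k j * v j := sum_comm
    _ = ∑ j ∈ S, w 0 j * v j + ∑ k : Fin K, ∑ j ∈ S, w (k + 1) j * v j := by
        rw [sum_range_succ', add_comm, ← Fin.sum_univ_eq_sum_range]
    _ ≤ V + ∑ k, v (g k) := add_le_add first_slot_le (sum_le_sum fun k _ => next_slot_le k)

end IsSlotting

end Slots

section Rounding

variable {R ι κ : Type*} [CommRing R] [LinearOrder R] [IsStrictOrderedRing R] [Fintype ι]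
  [Fintype κ]

theorem exists_slot_assignment {α : Type*} [LE α] [DecidableEq κ] {s : κ → ℕ} {z : ι → κ → R}
    {v : ι → κ → α} {w : ι → ℕ → κ → R} {K : ι → ℕ} (hs : ∀ j, ∑ i, z i j ≤ s j)
    (hw : ∀ i, IsSlotting univ (z i) (v i) (w i)) (hK : ∀ i, (K i : R) ≤ ∑ j, z i j)
    (hK' : ∀ i, ∑ j, z i j ≤ K i + 1) :
    ∃ g : (i : ι) → Fin (K i) → κ, (∀ i, ∀ k : Fin (K i), 0 < w i k (g i k)) ∧
      ∀ j, ∑ i, #{k | g i k = j} ≤ s j := by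
  have slot_full (a : Σ i, Fin (K i)) : 1 ≤ ∑ j, w a.1 a.2 j := by
    refine ((hw a.1).sum_slot_eq_one ((?_ : _ ≤ (K a.1 : R)).trans (hK a.1))).ge
    exact_mod_cast Nat.succ_le_of_lt a.2.2
  have supply (j : κ) : ∑ a : Σ i, Fin (K i), w a.1 a.2 j ≤ s j := by
    refine le_trans ?_ (hs j)
    rw [Fintype.sum_sigma]
    refine sum_le_sum fun i _ => ?_
    rw [Fin.sum_univ_eq_sum_range (w i · j)]
    exact (hw i).sum_range_le (hK' i) (mem_univ j)
  obtain ⟨g, g_pos, hg⟩ := exists_assignment_of_fractional s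
    (fun (a : Σ i, Fin (K i)) j => w a.1 a.2 j)
    (fun a j => (hw a.1).nonneg _ j (mem_univ j)) slot_full supply
  refine ⟨fun i k => g ⟨i, k⟩, fun i k => g_pos ⟨i, k⟩, fun j => ?_⟩
  simpa only [card_filter, Fintype.sum_sigma] using hg j

theorem shmoys_tardos_rounding_general [FloorSemiring R] (s : κ → ℕ) (z v : ι → κ → R)
    (V : ι → R) (hz : ∀ i j, 0 ≤ z i j) (hs : ∀ j, ∑ i, z i j ≤ s j) (hv : ∀ i j, 0 ≤ v i j)
    (hV : ∀ i, 0 ≤ V i) (hvV : ∀ i j, 0 < z i j → v i j ≤ V i) :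
    ∃ x : ι → κ → ℕ,
      (∀ i j, 0 < x i j → 0 < z i j) ∧
      (∀ j, ∑ i, x i j ≤ s j) ∧
      (∀ i, ∑ j, x i j ≤ ⌊∑ j, z i j⌋₊) ∧
      ∀ i, ∑ j, z i j * v i j - V i ≤ ∑ j, x i j * v i j := by
  classical
  choose w hw using fun i => exists_isSlotting univ (v i) fun j _ => hz i j
  have floor_le (i : ι) : (⌊∑ j, z i j⌋₊ : R) ≤ ∑ j, z i j :=
    Nat.floor_le (sum_nonneg fun j _ => hz i j)
  have le_floor_add_one (i : ι) : ∑ j, z i j ≤ ⌊∑ j, z i j⌋₊ + 1 :=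
    (Nat.lt_floor_add_one (∑ j, z i j)).le
  obtain ⟨g, g_pos, g_supply⟩ := exists_slot_assignment hs hw floor_le le_floor_add_one
  refine ⟨fun i j => #{k | g i k = j}, fun i j hij => ?_, g_supply, fun i => ?_, fun i => ?_⟩
  · obtain ⟨k, hk⟩ := card_pos.1 hij
    obtain rfl : g i k = j := (mem_filter.1 hk).2
    exact (g_pos i k).trans_le
      ((hw i).weight_le (le_floor_add_one i) (mem_univ _) (k.2.trans (Nat.lt_succ_self _)))
  · rw [← card_eq_sum_card_fiberwise (fun k _ => mem_coe.2 (mem_univ (g i k))), card_univ,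
      Fintype.card_fin]
  · have value_eq : ∑ j, (#{k | g i k = j} : R) * v i j = ∑ k, v i (g i k) := by
      simp only [← sum_fiberwise' univ (g i) (v i), sum_const, nsmul_eq_mul]
    rw [value_eq, sub_le_iff_le_add']
    exact (hw i).sum_mul_le_add_sum (le_floor_add_one i) (fun j _ => hv i j) (hV i)
      (fun j _ => hvV i j) (fun k => mem_univ _) (g_pos i)

end Rounding

/-- Shmoys–Tardos-type rounding of the assignment LP with cardinality constraints: a
fractional solution `z` of (A1), (A2), (A4) can be rounded to an integral allocation,
supported within the support of `z`, respecting the supplies and cardinality bounds and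
giving each machine `i` total (truncated) capacity at least `D_i − C_i`, where
`C_i = max{c_j : z_{ij} > 0}`. -/
theorem shmoys_tardos_rounding (m n : ℕ)
    (D : Fin m → ℝ) (hD : ∀ i, 0 < D i)
    (f : Fin m → ℕ)
    (c : Fin n → ℝ) (hc : ∀ j, 0 < c j)
    (s : Fin n → ℕ)
    (z : Fin m → Fin n → ℝ) (hz : ∀ i j, 0 ≤ z i j)
    (hA1 : ∀ j, ∑ i, z i j ≤ (s j : ℝ))
    (hA2 : ∀ i, D i ≤ ∑ j, z i j * min (c j) (D i))
    (hA4 : ∀ i, ∑ j, z i j ≤ (f i : ℝ))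
    (Cmax : Fin m → ℝ)
    (hCmax : ∀ i, IsGreatest {r : ℝ | ∃ j, 0 < z i j ∧ c j = r} (Cmax i)) :
    ∃ nn : Fin m → Fin n → ℕ,
      (∀ i j, 0 < nn i j → 0 < z i j) ∧
      (∀ j, ∑ i, nn i j ≤ s j) ∧
      (∀ i, ∑ j, nn i j ≤ f i) ∧
      (∀ i, D i - Cmax i ≤ ∑ j, (nn i j : ℝ) * min (c j) (D i)) := by
  obtain ⟨x, hpos, hs, hf, hvalue⟩ := shmoys_tardos_rounding_general s z
    (fun i j => min (c j) (D i)) Cmax hz hA1 (fun i j => (lt_min (hc j) (hD i)).le)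
    (fun i => let ⟨⟨j, _, hj⟩, _⟩ := hCmax i; hj ▸ (hc j).le)
    (fun i j hij => (min_le_left _ _).trans ((hCmax i).2 ⟨j, hij, rfl⟩))
  exact ⟨x, hpos, hs, fun i => (hf i).trans (Nat.floor_le_of_le (hA4 i)),
    fun i => (sub_le_sub_right (hA2 i) _).trans (hvalue i)⟩
end

section
/- There exist six perfect matchings M_1,…,M_6 of the Petersen graph such that every edge of the Petersen graph belongs to exactly two of M_1,…,M_6. -/
open Finset

/-- The edge set of the Petersen graph on vertex set `Fin 10`: the outer 5-cycle on
`{0,…,4}`, the spokes `{i, i+5}`, and the inner 5-cycle `{5+i, 5+((i+2) mod 5)}`. -/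
def petersenEdges : Finset (Sym2 (Fin 10)) :=
  { s(0, 1), s(1, 2), s(2, 3), s(3, 4), s(4, 0),
    s(0, 5), s(1, 6), s(2, 7), s(3, 8), s(4, 9),
    s(5, 7), s(6, 8), s(7, 9), s(8, 5), s(9, 6) }

/-- A perfect matching of the Petersen graph: a set of `5` pairwise vertex-disjoint
Petersen edges covering all `10` vertices. -/
def IsPetersenPerfectMatching (M : Finset (Sym2 (Fin 10))) : Prop :=
  M ⊆ petersenEdges ∧ M.card = 5 ∧
  (∀ e ∈ M, ∀ e' ∈ M, e ≠ e' → ∀ v : Fin 10, v ∈ e → v ∉ e') ∧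
  (∀ v : Fin 10, ∃ e ∈ M, v ∈ e)

/-!
The rotation `i ↦ i + 1` of both 5-cycles generates a group of order 5 that acts simply transitively
on the outer edges, on the spokes and on the inner edges. A matching made of one spoke, two outer
edges and two inner edges therefore has five rotations that cover every spoke once and every other
edge twice. The matching consisting of all the spokes supplies the missing cover of the spokes.
-/

section IncidenceCounting

variable {V : Type*} {M : Finset (Sym2 V)}

lemma one_le_card_filter_mem [DecidableEq V] (hcover : ∀ v, ∃ e ∈ M, v ∈ e) (v : V) :
    1 ≤ #{e ∈ M | v ∈ e} :=
  card_pos.2 (filter_nonempty_iff.2 (hcover v))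

lemma sum_card_filter_mem_le_two_mul_card [Fintype V] [DecidableEq V] (M : Finset (Sym2 V)) :
    ∑ v, #{e ∈ M | v ∈ e} ≤ 2 * #M :=
  calc
    ∑ v, #{e ∈ M | v ∈ e} = ∑ e ∈ M, #{v | v ∈ e} :=
      sum_card_bipartiteAbove_eq_sum_card_bipartiteBelow (fun v e ↦ v ∈ e)
    _ ≤ ∑ _e ∈ M, 2 := sum_le_sum fun e _ ↦ by
      have htoFinset : ({v | v ∈ e} : Finset V) = e.toFinset := by ext; simp
      rw [htoFinset, Sym2.card_toFinset]
      split_ifs <;> simp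
    _ = 2 * #M := by simp [mul_comm]

lemma card_le_two_mul_card_of_cover [Fintype V] (hcover : ∀ v, ∃ e ∈ M, v ∈ e) :
    Fintype.card V ≤ 2 * #M := by
  classical
  calc
    Fintype.card V = ∑ _v : V, 1 := by simp
    _ ≤ ∑ v, #{e ∈ M | v ∈ e} := sum_le_sum fun v _ ↦ one_le_card_filter_mem hcover v
    _ ≤ 2 * #M := sum_card_filter_mem_le_two_mul_card M

lemma eq_of_mem_of_cover_of_two_mul_card_le [Fintype V]
    (hcover : ∀ v, ∃ e ∈ M, v ∈ e) (hcard : 2 * #M ≤ Fintype.card V) {e e' : Sym2 V}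
    (he : e ∈ M) (he' : e' ∈ M) {v : V} (hv : v ∈ e) (hv' : v ∈ e') : e = e' := by
  classical
  have hsum_le : ∑ v, #{e ∈ M | v ∈ e} ≤ ∑ _v : V, 1 := by
    simpa using (sum_card_filter_mem_le_two_mul_card M).trans hcard
  have hle : ∀ v ∈ univ, 1 ≤ #{e ∈ M | v ∈ e} := fun v _ ↦ one_le_card_filter_mem hcover v
  have hone : 1 = #{e ∈ M | v ∈ e} :=
    (sum_eq_sum_iff_of_le hle).1 ((sum_le_sum hle).antisymm hsum_le) v (mem_univ v)
  exact card_le_one.1 hone.ge e (mem_filter.2 ⟨he, hv⟩) e' (mem_filter.2 ⟨he', hv'⟩)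

end IncidenceCounting

lemma isPetersenPerfectMatching_of_cover {M : Finset (Sym2 (Fin 10))} (hsub : M ⊆ petersenEdges)
    (hcard : #M ≤ 5) (hcover : ∀ v, ∃ e ∈ M, v ∈ e) : IsPetersenPerfectMatching M := by
  have hfive : 5 ≤ #M := by
    have := card_le_two_mul_card_of_cover hcover
    rw [Fintype.card_fin] at this
    lia
  have htwo : 2 * #M ≤ Fintype.card (Fin 10) := by
    rw [Fintype.card_fin]
    lia
  refine ⟨hsub, hcard.antisymm hfive, fun e he e' he' hne v hv hv' ↦ hne ?_, hcover⟩
  exact eq_of_mem_of_cover_of_two_mul_card_le hcover htwo he he' hv hv'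

lemma card_filter_sub_mem {G : Type*} [AddGroup G] [Fintype G] [DecidableEq G] (a : G)
    (s : Finset G) : #{i | a - i ∈ s} = #s :=
  card_equiv (Equiv.subLeft a) (by simp)

/-- The vertex `i` of the outer 5-cycle. The index type `Fin 5` plays the role of `ℤ/5ℤ`, on which
the rotations of the Petersen graph act by translation. -/
def outerVertex (i : Fin 5) : Fin 10 := Fin.castAdd 5 i

/-- The vertex `5 + i` of the inner 5-cycle, the neighbour of `outerVertex i` off the outer
cycle. -/
def innerVertex (i : Fin 5) : Fin 10 := Fin.natAdd 5 i

/-- The edge of the outer 5-cycle starting at `outerVertex i`. -/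
def outerEdge (i : Fin 5) : Sym2 (Fin 10) := s(outerVertex i, outerVertex (i + 1))

/-- The spoke at `outerVertex i`. -/
def spokeEdge (i : Fin 5) : Sym2 (Fin 10) := s(outerVertex i, innerVertex i)

/-- The edge of the inner 5-cycle starting at `innerVertex i`, when that cycle is traversed in
steps of two. -/
def innerEdge (i : Fin 5) : Sym2 (Fin 10) := s(innerVertex i, innerVertex (i + 2))

lemma forall_vertex_iff {p : Fin 10 → Prop} :
    (∀ v, p v) ↔ (∀ i, p (outerVertex i)) ∧ ∀ i, p (innerVertex i) :=
  ⟨fun h ↦ ⟨fun _ ↦ h _, fun _ ↦ h _⟩, fun h ↦ Fin.addCases (m := 5) (n := 5) h.1 h.2⟩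

lemma petersenEdges_eq_union :
    petersenEdges = univ.image outerEdge ∪ univ.image spokeEdge ∪ univ.image innerEdge := by
  decide

lemma forall_mem_petersenEdges_iff {p : Sym2 (Fin 10) → Prop} :
    (∀ e ∈ petersenEdges, p e) ↔
      (∀ i, p (outerEdge i)) ∧ (∀ i, p (spokeEdge i)) ∧ ∀ i, p (innerEdge i) := by
  simp [petersenEdges_eq_union, or_imp, forall_and]

lemma outerEdge_mem_petersenEdges (i : Fin 5) : outerEdge i ∈ petersenEdges :=
  (forall_mem_petersenEdges_iff.1 fun _ ↦ id).1 i

lemma spokeEdge_mem_petersenEdges (i : Fin 5) : spokeEdge i ∈ petersenEdges :=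
  (forall_mem_petersenEdges_iff.1 fun _ ↦ id).2.1 i

lemma innerEdge_mem_petersenEdges (i : Fin 5) : innerEdge i ∈ petersenEdges :=
  (forall_mem_petersenEdges_iff.1 fun _ ↦ id).2.2 i

/-- The perfect matching of the Petersen graph formed by its five spokes. -/
def spokeMatching : Finset (Sym2 (Fin 10)) := univ.image spokeEdge

/-- The perfect matching of the Petersen graph whose only spoke is the one at `outerVertex i`: each
of the two 5-cycles loses one vertex, and the remaining path on four vertices contributes its two
end edges. These five matchings are the rotations of one another. -/
def singleSpokeMatching (i : Fin 5) : Finset (Sym2 (Fin 10)) :=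
  {spokeEdge i, outerEdge (i + 1), outerEdge (i + 3), innerEdge (i + 1), innerEdge (i + 2)}

lemma spokeEdge_mem_spokeMatching (i : Fin 5) : spokeEdge i ∈ spokeMatching :=
  mem_image_of_mem _ (mem_univ i)

lemma outerEdge_notMem_spokeMatching (i : Fin 5) : outerEdge i ∉ spokeMatching := by
  decide +revert

lemma innerEdge_notMem_spokeMatching (i : Fin 5) : innerEdge i ∉ spokeMatching := by
  decide +revert

lemma spokeEdge_mem_singleSpokeMatching {i j : Fin 5} :
    spokeEdge j ∈ singleSpokeMatching i ↔ j - i ∈ ({0} : Finset (Fin 5)) := by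
  decide +revert

lemma outerEdge_mem_singleSpokeMatching {i j : Fin 5} :
    outerEdge j ∈ singleSpokeMatching i ↔ j - i ∈ ({1, 3} : Finset (Fin 5)) := by
  decide +revert

lemma innerEdge_mem_singleSpokeMatching {i j : Fin 5} :
    innerEdge j ∈ singleSpokeMatching i ↔ j - i ∈ ({1, 2} : Finset (Fin 5)) := by
  decide +revert

lemma isPetersenPerfectMatching_spokeMatching : IsPetersenPerfectMatching spokeMatching := by
  refine isPetersenPerfectMatching_of_cover ?_ card_image_le (forall_vertex_iff.2 ⟨?_, ?_⟩)
  · exact image_subset_iff.2 fun i _ ↦ spokeEdge_mem_petersenEdges i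
  · exact fun i ↦ ⟨spokeEdge i, spokeEdge_mem_spokeMatching i, Sym2.mem_mk_left _ _⟩
  · exact fun i ↦ ⟨spokeEdge i, spokeEdge_mem_spokeMatching i, Sym2.mem_mk_right _ _⟩

lemma exists_mem_singleSpokeMatching_outerVertex_mem (i j : Fin 5) :
    ∃ e ∈ singleSpokeMatching i, outerVertex j ∈ e := by
  obtain ⟨k, rfl⟩ : ∃ k, j = i + k := ⟨j - i, by simp⟩
  fin_cases k
  · exact ⟨spokeEdge i, by simp [singleSpokeMatching], by simp [spokeEdge]⟩
  · exact ⟨outerEdge (i + 1), by simp [singleSpokeMatching], by simp [outerEdge]⟩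
  · exact ⟨outerEdge (i + 1), by simp [singleSpokeMatching], by simp [outerEdge, add_assoc]⟩
  · exact ⟨outerEdge (i + 3), by simp [singleSpokeMatching], by simp [outerEdge]⟩
  · exact ⟨outerEdge (i + 3), by simp [singleSpokeMatching], by simp [outerEdge, add_assoc]⟩

lemma exists_mem_singleSpokeMatching_innerVertex_mem (i j : Fin 5) :
    ∃ e ∈ singleSpokeMatching i, innerVertex j ∈ e := by
  obtain ⟨k, rfl⟩ : ∃ k, j = i + k := ⟨j - i, by simp⟩
  fin_cases k
  · exact ⟨spokeEdge i, by simp [singleSpokeMatching], by simp [spokeEdge]⟩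
  · exact ⟨innerEdge (i + 1), by simp [singleSpokeMatching], by simp [innerEdge]⟩
  · exact ⟨innerEdge (i + 2), by simp [singleSpokeMatching], by simp [innerEdge]⟩
  · exact ⟨innerEdge (i + 1), by simp [singleSpokeMatching], by simp [innerEdge, add_assoc]⟩
  · exact ⟨innerEdge (i + 2), by simp [singleSpokeMatching], by simp [innerEdge, add_assoc]⟩

lemma isPetersenPerfectMatching_singleSpokeMatching (i : Fin 5) :
    IsPetersenPerfectMatching (singleSpokeMatching i) := by
  refine isPetersenPerfectMatching_of_cover ?_ card_le_five (forall_vertex_iff.2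
    ⟨exists_mem_singleSpokeMatching_outerVertex_mem i,
      exists_mem_singleSpokeMatching_innerVertex_mem i⟩)
  simp [singleSpokeMatching, insert_subset_iff, spokeEdge_mem_petersenEdges,
    outerEdge_mem_petersenEdges, innerEdge_mem_petersenEdges]

lemma card_filter_spokeEdge_mem_singleSpokeMatching (j : Fin 5) :
    #{i | spokeEdge j ∈ singleSpokeMatching i} = 1 := by
  simp_rw [spokeEdge_mem_singleSpokeMatching, card_filter_sub_mem, card_singleton]

lemma card_filter_outerEdge_mem_singleSpokeMatching (j : Fin 5) :
    #{i | outerEdge j ∈ singleSpokeMatching i} = 2 := by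
  simp_rw [outerEdge_mem_singleSpokeMatching, card_filter_sub_mem]
  rfl

lemma card_filter_innerEdge_mem_singleSpokeMatching (j : Fin 5) :
    #{i | innerEdge j ∈ singleSpokeMatching i} = 2 := by
  simp_rw [innerEdge_mem_singleSpokeMatching, card_filter_sub_mem]
  rfl

/-- The six perfect matchings of the double cover: the spokes at index `0`, followed by the five
rotated matchings `singleSpokeMatching i`. -/
def petersenMatching : Fin 6 → Finset (Sym2 (Fin 10)) :=
  Fin.cons spokeMatching singleSpokeMatching

lemma isPetersenPerfectMatching_petersenMatching (t : Fin 6) :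
    IsPetersenPerfectMatching (petersenMatching t) :=
  Fin.cases isPetersenPerfectMatching_spokeMatching isPetersenPerfectMatching_singleSpokeMatching t

lemma card_filter_mem_petersenMatching (e : Sym2 (Fin 10)) :
    #{t | e ∈ petersenMatching t} =
      (if e ∈ spokeMatching then 1 else 0) + #{i | e ∈ singleSpokeMatching i} :=
  Fin.card_filter_univ_succ' _

/-- There exist six perfect matchings of the Petersen graph such that every edge of the
Petersen graph belongs to exactly two of them. -/
theorem petersen_six_perfect_matchings :
    ∃ M : Fin 6 → Finset (Sym2 (Fin 10)),
      (∀ t, IsPetersenPerfectMatching (M t)) ∧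
      (∀ e ∈ petersenEdges, (Finset.univ.filter (fun t => e ∈ M t)).card = 2) := by
  refine ⟨petersenMatching, isPetersenPerfectMatching_petersenMatching, ?_⟩
  simp_rw [card_filter_mem_petersenMatching]
  refine forall_mem_petersenEdges_iff.2 ⟨fun j ↦ ?outer, fun j ↦ ?spoke, fun j ↦ ?inner⟩
  case outer =>
    rw [if_neg (outerEdge_notMem_spokeMatching j), card_filter_outerEdge_mem_singleSpokeMatching]
  case spoke =>
    rw [if_pos (spokeEdge_mem_spokeMatching j), card_filter_spokeEdge_mem_singleSpokeMatching]
  case inner =>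
    rw [if_neg (innerEdge_notMem_spokeMatching j), card_filter_innerEdge_mem_singleSpokeMatching]
end

section
/- The edge set of the Petersen graph cannot be partitioned into three perfect matchings. -/
open Finset

/-!
A perfect matching crosses an odd vertex cut an odd number of times, so it contains an odd number
of the five spokes, which separate the outer 5-cycle from the inner one. If it omits the spoke
at `i`, the outer end of that spoke is matched to a neighbour at `i ± 1` and the inner end to a
neighbour at `i ± 2`, and the spokes there are omitted too; so it contains one spoke or five.
Two disjoint perfect matchings `M` and `N` of a cubic graph leave a third one. Hence five would be
a sum of three numbers each equal to one or five, which is impossible.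
-/

theorem odd_card_odd_bipartiteAbove_iff {α β : Type*} (r : α → β → Prop) (s : Finset α)
    (t : Finset β) [∀ a b, Decidable (r a b)] :
    Odd #{a ∈ s | Odd #(t.bipartiteAbove r a)} ↔ Odd #{b ∈ t | Odd #(s.bipartiteBelow r b)} := by
  rw [← odd_sum_iff_odd_card_odd, ← odd_sum_iff_odd_card_odd,
    sum_card_bipartiteAbove_eq_sum_card_bipartiteBelow]

theorem card_filter_add_card_filter_add_card_filter_sdiff {α : Type*} [DecidableEq α]
    {s t u : Finset α} (hs : s ⊆ u) (ht : t ⊆ u) (hst : Disjoint s t) (p : α → Prop)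
    [DecidablePred p] :
    #{a ∈ s | p a} + #{a ∈ t | p a} + #{a ∈ u \ (s ∪ t) | p a} = #{a ∈ u | p a} := by
  rw [← card_union_of_disjoint (disjoint_filter_filter hst), ← filter_union,
    ← card_union_of_disjoint (disjoint_filter_filter disjoint_sdiff), ← filter_union,
    union_sdiff_of_subset (union_subset hs ht)]

section EdgeSets

variable {V : Type*} [DecidableEq V] {E M N : Finset (Sym2 V)}

/-- A perfect matching, as a bare set of edges on the vertex type `V`: every vertex lies on exactly
one of them. No ambient graph is recorded, so that the notion applies directly to the edges left
over by other matchings. -/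
def IsPerfectEdgeSet (M : Finset (Sym2 V)) : Prop :=
  ∀ v, #{e ∈ M | v ∈ e} = 1

theorem IsPerfectEdgeSet.eq_of_mem (hM : IsPerfectEdgeSet M) {e e' : Sym2 V} {v : V}
    (he : e ∈ M) (he' : e' ∈ M) (hv : v ∈ e) (hv' : v ∈ e') : e = e' :=
  card_le_one.mp (hM v).le e (mem_filter.mpr ⟨he, hv⟩) e' (mem_filter.mpr ⟨he', hv'⟩)

theorem IsPerfectEdgeSet.exists_mem (hM : IsPerfectEdgeSet M) (v : V) : ∃ e ∈ M, v ∈ e := by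
  obtain ⟨e, he⟩ := card_pos.mp (hM v ▸ Nat.one_pos)
  exact ⟨e, mem_filter.mp he⟩

theorem IsPerfectEdgeSet.odd_card_crossing_iff (hM : IsPerfectEdgeSet M) (S : Finset V) :
    Odd #{e ∈ M | Odd #{v ∈ S | v ∈ e}} ↔ Odd #S := by
  have h := odd_card_odd_bipartiteAbove_iff (fun v e ↦ v ∈ e) S M
  have hS : {v ∈ S | Odd #(M.bipartiteAbove (fun v e ↦ v ∈ e) v)} = S :=
    filter_true_of_mem fun v _ ↦ (hM v).symm ▸ odd_one
  rw [hS] at h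
  exact h.symm

theorem IsPerfectEdgeSet.sdiff_union (hE : ∀ v, #{e ∈ E | v ∈ e} = 3) (hM : IsPerfectEdgeSet M)
    (hN : IsPerfectEdgeSet N) (hME : M ⊆ E) (hNE : N ⊆ E) (hMN : Disjoint M N) :
    IsPerfectEdgeSet (E \ (M ∪ N)) := fun v ↦ by
  have hsum := card_filter_add_card_filter_add_card_filter_sdiff hME hNE hMN (v ∈ ·)
  rw [hE, hM v, hN v] at hsum
  lia

end EdgeSets

theorem IsPetersenPerfectMatching.isPerfectEdgeSet {M : Finset (Sym2 (Fin 10))}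
    (hM : IsPetersenPerfectMatching M) : IsPerfectEdgeSet M := fun v ↦ by
  obtain ⟨-, -, hdisj, hcover⟩ := hM
  obtain ⟨e, he, hv⟩ := hcover v
  refine card_eq_one.mpr ⟨e, ?_⟩
  ext e'
  grind

theorem card_petersenEdges_filter_mem (v : Fin 10) : #{e ∈ petersenEdges | v ∈ e} = 3 := by
  decide +revert

/-- The spoke of the Petersen graph at position `i`: in the numbering of `petersenEdges` it joins
the outer vertex `Fin.castAdd 5 i = i` to the inner vertex `Fin.natAdd 5 i = 5 + i`. -/
def petersenSpoke (i : Fin 5) : Sym2 (Fin 10) :=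
  s(Fin.castAdd 5 i, Fin.natAdd 5 i)

/-- The set of all five spokes, the cut between the outer and the inner 5-cycle. -/
def petersenSpokes : Finset (Sym2 (Fin 10)) :=
  univ.image petersenSpoke

theorem petersenSpoke_injective : Function.Injective petersenSpoke := by
  decide

theorem card_petersenSpokes : #petersenSpokes = 5 := by
  decide

theorem petersenSpokes_subset_petersenEdges : petersenSpokes ⊆ petersenEdges := by
  decide

theorem odd_card_Iio_five_filter_mem_iff {e : Sym2 (Fin 10)} (he : e ∈ petersenEdges) :
    Odd #{v ∈ Iio 5 | v ∈ e} ↔ e ∈ petersenSpokes := by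
  decide +revert

theorem eq_petersenSpoke_or_outer_of_mem {e : Sym2 (Fin 10)} (he : e ∈ petersenEdges) {i : Fin 5}
    (hi : Fin.castAdd 5 i ∈ e) :
    e = petersenSpoke i ∨
      ∃ k, (k = i + 1 ∨ k = i - 1) ∧ e = s(Fin.castAdd 5 i, Fin.castAdd 5 k) := by
  decide +revert

theorem eq_petersenSpoke_or_inner_of_mem {e : Sym2 (Fin 10)} (he : e ∈ petersenEdges) {i : Fin 5}
    (hi : Fin.natAdd 5 i ∈ e) :
    e = petersenSpoke i ∨
      ∃ k, (k = i + 2 ∨ k = i - 2) ∧ e = s(Fin.natAdd 5 i, Fin.natAdd 5 k) := by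
  decide +revert

theorem castAdd_castAdd_ne_petersenSpoke (i j k : Fin 5) :
    s(Fin.castAdd 5 i, Fin.castAdd 5 j) ≠ petersenSpoke k := by
  decide +revert

theorem natAdd_natAdd_ne_petersenSpoke (i j k : Fin 5) :
    s(Fin.natAdd 5 i, Fin.natAdd 5 j) ≠ petersenSpoke k := by
  decide +revert

section PerfectEdgeSets

variable {M : Finset (Sym2 (Fin 10))}

theorem IsPerfectEdgeSet.odd_card_inter_petersenSpokes (hM : IsPerfectEdgeSet M)
    (hME : M ⊆ petersenEdges) : Odd #(M ∩ petersenSpokes) := by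
  have hcut : {e ∈ M | Odd #{v ∈ Iio 5 | v ∈ e}} = M ∩ petersenSpokes := by
    rw [← filter_mem_eq_inter]
    exact filter_congr fun e he ↦ odd_card_Iio_five_filter_mem_iff (hME he)
  rw [← hcut, hM.odd_card_crossing_iff]
  decide

theorem IsPerfectEdgeSet.exists_outer_petersenSpoke_notMem (hM : IsPerfectEdgeSet M)
    (hME : M ⊆ petersenEdges) {i : Fin 5} (hi : petersenSpoke i ∉ M) :
    ∃ k, (k = i + 1 ∨ k = i - 1) ∧ petersenSpoke k ∉ M := by
  obtain ⟨e, he, hie⟩ := hM.exists_mem (Fin.castAdd 5 i)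
  obtain rfl | ⟨k, hk, rfl⟩ := eq_petersenSpoke_or_outer_of_mem (hME he) hie
  · exact absurd he hi
  · exact ⟨k, hk, fun hkM ↦ castAdd_castAdd_ne_petersenSpoke i k k
      (hM.eq_of_mem he hkM (Sym2.mem_mk_right _ _) (Sym2.mem_mk_left _ _))⟩

theorem IsPerfectEdgeSet.exists_inner_petersenSpoke_notMem (hM : IsPerfectEdgeSet M)
    (hME : M ⊆ petersenEdges) {i : Fin 5} (hi : petersenSpoke i ∉ M) :
    ∃ k, (k = i + 2 ∨ k = i - 2) ∧ petersenSpoke k ∉ M := by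
  obtain ⟨e, he, hie⟩ := hM.exists_mem (Fin.natAdd 5 i)
  obtain rfl | ⟨k, hk, rfl⟩ := eq_petersenSpoke_or_inner_of_mem (hME he) hie
  · exact absurd he hi
  · exact ⟨k, hk, fun hkM ↦ natAdd_natAdd_ne_petersenSpoke i k k
      (hM.eq_of_mem he hkM (Sym2.mem_mk_right _ _) (Sym2.mem_mk_right _ _))⟩

theorem IsPerfectEdgeSet.two_lt_card_petersenSpokes_sdiff (hM : IsPerfectEdgeSet M)
    (hME : M ⊆ petersenEdges) {i : Fin 5} (hi : petersenSpoke i ∉ M) :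
    2 < #(petersenSpokes \ M) := by
  obtain ⟨j, hij, hj⟩ := hM.exists_outer_petersenSpoke_notMem hME hi
  obtain ⟨k, hik, hk⟩ := hM.exists_inner_petersenSpoke_notMem hME hi
  have hdistinct : i ≠ j ∧ i ≠ k ∧ j ≠ k := by
    grind
  have hmem {l : Fin 5} (hl : petersenSpoke l ∉ M) : petersenSpoke l ∈ petersenSpokes \ M :=
    mem_sdiff.mpr ⟨mem_image_of_mem _ (mem_univ l), hl⟩
  exact two_lt_card.mpr ⟨_, hmem hi, _, hmem hj, _, hmem hk,
    petersenSpoke_injective.ne hdistinct.1, petersenSpoke_injective.ne hdistinct.2.1,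
    petersenSpoke_injective.ne hdistinct.2.2⟩

theorem IsPerfectEdgeSet.card_inter_petersenSpokes (hM : IsPerfectEdgeSet M)
    (hME : M ⊆ petersenEdges) : #(M ∩ petersenSpokes) = 1 ∨ #(M ∩ petersenSpokes) = 5 := by
  by_cases hall : petersenSpokes ⊆ M
  · right
    rw [inter_eq_right.mpr hall, card_petersenSpokes]
  · left
    obtain ⟨i, hi⟩ : ∃ i, petersenSpoke i ∉ M := by
      simpa [petersenSpokes, image_subset_iff] using hall
    have homitted := hM.two_lt_card_petersenSpokes_sdiff hME hi
    have hsum := card_inter_add_card_sdiff petersenSpokes M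
    rw [inter_comm, card_petersenSpokes] at hsum
    obtain ⟨m, hm⟩ := hM.odd_card_inter_petersenSpokes hME
    lia

end PerfectEdgeSets

theorem petersen_no_three_matching_partition_general {M N : Finset (Sym2 (Fin 10))}
    (hM : IsPetersenPerfectMatching M) (hN : IsPetersenPerfectMatching N) : ¬Disjoint M N := by
  intro hMN
  have hL : IsPerfectEdgeSet (petersenEdges \ (M ∪ N)) :=
    .sdiff_union card_petersenEdges_filter_mem hM.isPerfectEdgeSet hN.isPerfectEdgeSet hM.1 hN.1 hMN
  have hsum : #(M ∩ petersenSpokes) + #(N ∩ petersenSpokes) +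
      #((petersenEdges \ (M ∪ N)) ∩ petersenSpokes) = 5 := by
    simpa only [filter_mem_eq_inter, inter_eq_right.mpr petersenSpokes_subset_petersenEdges,
      card_petersenSpokes] using
      card_filter_add_card_filter_add_card_filter_sdiff hM.1 hN.1 hMN (· ∈ petersenSpokes)
  have hcM := hM.isPerfectEdgeSet.card_inter_petersenSpokes hM.1
  have hcN := hN.isPerfectEdgeSet.card_inter_petersenSpokes hN.1
  have hcL := hL.card_inter_petersenSpokes sdiff_subset
  lia

/-- The edge set of the Petersen graph cannot be partitioned into three perfect
matchings. -/
theorem petersen_no_three_matching_partition :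
    ¬ ∃ M : Fin 3 → Finset (Sym2 (Fin 10)),
        (∀ t, IsPetersenPerfectMatching (M t)) ∧
        (∀ t₁ t₂, t₁ ≠ t₂ → Disjoint (M t₁) (M t₂)) ∧
        (Finset.univ.biUnion M = petersenEdges) := by
  rintro ⟨M, hM, hdisj, -⟩
  exact petersen_no_three_matching_partition_general (hM 0) (hM 1) (hdisj 0 1 (by decide))
end
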